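/- Let V be a finite set, I a finite index set, A : I → Finset V a family of subsets of V, and σ a permutation of I. If J₁ ⊆ J₂ ⊆ I and J₂ is Venn-good for σ, then J₁ is Venn-good for σ. -/

import Mathlib

/-- The Venn cell cardinality `ℓ(J, J')` of a family `A : I → Finset V`:
the number of elements of `V` lying in every set `A i` for `i ∈ J'` and in
no set `A i` for `i ∈ J \ J'`. -/
def vennCard {V I : Type*} [Fintype V] [DecidableEq V] [DecidableEq I]
    (A : I → Finset V) (J J' : Finset I) : ℕ :=
  ((J'.inf A) \ ((J \ J').sup A)).card

/-- A subset `J` of the index set is *Venn-good* for a permutation `σ` if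
`ℓ(J, J') = ℓ(σ(J), σ(J'))` for every nonempty `J' ⊆ J`. -/
def VennGood {V I : Type*} [Fintype V] [DecidableEq V] [DecidableEq I]
    (A : I → Finset V) (σ : Equiv.Perm I) (J : Finset I) : Prop :=
  ∀ J' ⊆ J, J'.Nonempty →
    vennCard A J J' = vennCard A (J.image σ) (J'.image σ)

/-!
Sort the elements `x` of `V` by their trace `{i ∈ J | x ∈ A i}` on `J`: the Venn cell of `J' ⊆ J`
consists of the elements with trace `J'`. The trace on `J₁ ⊆ J₂` is the trace on `J₂` intersected
with `J₁`, so `ℓ(J₁, J')` is the sum of the `ℓ(J₂, T)` with `T ∩ J₁ = J'`. Relabelling along `σ`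
replaces `A` by `A ∘ σ`, and the two families have equal summands, as `J' ⊆ T` makes `T` nonempty.
-/

section VennCard

variable {V I : Type*} [Fintype V] [DecidableEq V] [DecidableEq I]

theorem vennCard_eq_card_filter (A : I → Finset V) {J J' : Finset I} (h : J' ⊆ J) :
    vennCard A J J' = Finset.card {x : V | {i ∈ J | x ∈ A i} = J'} := by
  unfold vennCard
  congr 1
  ext x
  simp only [Finset.mem_sdiff, Finset.mem_inf, Finset.mem_sup, Finset.mem_filter, Finset.mem_univ,
    true_and, Finset.ext_iff]
  grind

theorem vennCard_eq_sum_of_subset (A : I → Finset V) {J₁ J₂ J' : Finset I}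
    (hJ : J₁ ⊆ J₂) (hJ' : J' ⊆ J₁) :
    vennCard A J₁ J' = ∑ T ∈ J₂.powerset with T ∩ J₁ = J', vennCard A J₂ T := by
  have trace_inter (x : V) : {i ∈ J₂ | x ∈ A i} ∩ J₁ = {i ∈ J₁ | x ∈ A i} := by
    rw [Finset.filter_inter, Finset.inter_eq_right.mpr hJ]
  rw [vennCard_eq_card_filter A hJ',
    Finset.card_eq_sum_card_fiberwise (f := fun x ↦ {i ∈ J₂ | x ∈ A i})
      (t := {T ∈ J₂.powerset | T ∩ J₁ = J'})
      (fun x hx ↦ by simpa [trace_inter] using hx)]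
  refine Finset.sum_congr rfl fun T hT ↦ ?_
  obtain ⟨hTJ, hTJ'⟩ : T ⊆ J₂ ∧ T ∩ J₁ = J' := by simpa using hT
  rw [vennCard_eq_card_filter A hTJ, Finset.filter_filter]
  congr 1
  refine Finset.filter_congr fun x _ ↦ and_iff_right_of_imp fun hx ↦ ?_
  rw [← trace_inter, hx, hTJ']

theorem vennCard_image {K : Type*} [DecidableEq K] (A : I → Finset V) {f : K → I}
    (hf : f.Injective) (J J' : Finset K) :
    vennCard A (J.image f) (J'.image f) = vennCard (A ∘ f) J J' := by
  simp only [vennCard, ← Finset.image_sdiff _ _ hf, Finset.inf_image, Finset.sup_image]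

theorem vennGood_mono_general (A : I → Finset V) (σ : Equiv.Perm I) (J₁ J₂ : Finset I)
    (hsub : J₁ ⊆ J₂) (hgood : VennGood A σ J₂) : VennGood A σ J₁ := by
  intro J' hJ' hne
  have cells_eq : ∀ T ∈ {T ∈ J₂.powerset | T ∩ J₁ = J'},
      vennCard A J₂ T = vennCard (A ∘ σ) J₂ T := by
    intro T hT
    obtain ⟨hTJ, rfl⟩ : T ⊆ J₂ ∧ T ∩ J₁ = J' := by simpa using hT
    rw [hgood T hTJ (hne.mono Finset.inter_subset_left), vennCard_image A σ.injective]
  calc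
    vennCard A J₁ J' = ∑ T ∈ J₂.powerset with T ∩ J₁ = J', vennCard A J₂ T :=
      vennCard_eq_sum_of_subset A hsub hJ'
    _ = ∑ T ∈ J₂.powerset with T ∩ J₁ = J', vennCard (A ∘ σ) J₂ T :=
      Finset.sum_congr rfl cells_eq
    _ = vennCard (A ∘ σ) J₁ J' := (vennCard_eq_sum_of_subset (A ∘ σ) hsub hJ').symm
    _ = vennCard A (J₁.image σ) (J'.image σ) := (vennCard_image A σ.injective J₁ J').symm

end VennCard

/-- Venn-goodness is monotone: if `J₁ ⊆ J₂` and `J₂` is Venn-good for `σ`,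
then so is `J₁`. -/
theorem vennGood_mono {V I : Type*}
    [Fintype V] [DecidableEq V] [Fintype I] [DecidableEq I]
    (A : I → Finset V) (σ : Equiv.Perm I) (J₁ J₂ : Finset I)
    (hsub : J₁ ⊆ J₂) (hgood : VennGood A σ J₂) :
    VennGood A σ J₁ :=
  vennGood_mono_general A σ J₁ J₂ hsub hgood
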